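/- Let q ≥ 2, set d′ = 2^{q−1}, and let τ = (Z ⊗ 1_{d′})/√d ∈ σ_q. Let σ_{q−1} be the set of normalized non-identity Hermitian Pauli operators on q−1 qubits and V_d^{q−1} = span{σ⊗σ : σ ∈ σ_{q−1}} ⊆ M_{d′} ⊗ M_{d′}, and let V_[S]^τ = span{S_{σ′,σ′·τ} : σ′ ∈ C_τ}. Then the linear map θ determined by θ(σ⊗σ) = S_{(1₂/√2)⊗σ, (Z/√2)⊗σ} for σ ∈ σ_{q−1} is a well-defined linear isomorphism from V_d^{q−1} onto V_[S]^τ, and for every C in the (q−1)-qubit Clifford normalizer 𝒩_{q−1} and every σ ∈ σ_{q−1} one has θ((CσC†)⊗(CσC†)) = φ⊗²(1₂⊗C)(θ(σ⊗σ)). -/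

import Mathlib

open Matrix MeasureTheory
open scoped Kronecker

noncomputable section

namespace CliffordPaper

/-- The single-qubit Pauli matrices `1, X, Y, Z`. -/
def pauli1 : Fin 4 → Matrix (Fin 2) (Fin 2) ℂ :=
  ![1, !![0, 1; 1, 0], !![0, -Complex.I; Complex.I, 0], !![1, 0; 0, -1]]

/-- Index type for the computational basis of `q` qubits. -/
abbrev Idx (q : ℕ) := Fin q → Fin 2

/-- The space `M_d` of `d × d` complex matrices, `d = 2^q`. -/
abbrev Mat (q : ℕ) := Matrix (Idx q) (Idx q) ℂ

/-- The space `M_d ⊗ M_d`, realized as matrices indexed by the product index set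
(the tensor factors combine via the Kronecker product `⊗ₖ`). -/
abbrev BMat (q : ℕ) := Matrix (Idx q × Idx q) (Idx q × Idx q) ℂ

/-- The `q`-fold Kronecker product of single-qubit Paulis with labels `a`. -/
def PauliOp {q : ℕ} (a : Fin q → Fin 4) : Mat q :=
  Matrix.of fun x y => ∏ i, pauli1 (a i) (x i) (y i)

/-- `√d` as a complex number, where `d = 2^q`. -/
def sqrtd (q : ℕ) : ℂ := (Real.sqrt (2 ^ q) : ℝ)

/-- The set `σ̂_q` of normalized Pauli operators. -/
def sigmaHat (q : ℕ) : Set (Mat q) :=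
  {M | ∃ a : Fin q → Fin 4, M = (sqrtd q)⁻¹ • PauliOp a}

/-- The normalized identity `σ₀ = 1/√d`. -/
def sigma0 (q : ℕ) : Mat q := (sqrtd q)⁻¹ • (1 : Mat q)

/-- `σ_q = σ̂_q \ {σ₀}`. -/
def sigmaSet (q : ℕ) : Set (Mat q) := sigmaHat q \ {sigma0 q}

/-- `N_τ`: the normalized nonidentity Paulis anticommuting with `τ`. -/
def NSet {q : ℕ} (τ : Mat q) : Set (Mat q) :=
  {σ | σ ∈ sigmaSet q ∧ σ * τ + τ * σ = 0}

/-- `C_τ`: the normalized nonidentity Paulis distinct from `τ` commuting with `τ`. -/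
def CSet {q : ℕ} (τ : Mat q) : Set (Mat q) :=
  {σ | σ ∈ sigmaSet q ∧ σ ≠ τ ∧ σ * τ = τ * σ}

/-- `Ĉ_τ`: the normalized Paulis commuting with `τ`. -/
def CHatSet {q : ℕ} (τ : Mat q) : Set (Mat q) :=
  {σ | σ ∈ sigmaHat q ∧ σ * τ = τ * σ}

/-- The normalized product `σ·τ = √d στ`. -/
def nprod {q : ℕ} (σ τ : Mat q) : Mat q := sqrtd q • (σ * τ)

/-- The Clifford normalizer `𝒩_q`: unitaries mapping normalized Paulis to
signed normalized Paulis under conjugation. -/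
def Cliff (q : ℕ) : Set (Mat q) :=
  {U | U ∈ Matrix.unitaryGroup (Idx q) ℂ ∧
    ∀ σ ∈ sigmaHat q, ∃ τ ∈ sigmaHat q, U * σ * Uᴴ = τ ∨ U * σ * Uᴴ = -τ}

/-- The two-copy representation `φ⊗²(U) : A ⊗ B ↦ (UAU†) ⊗ (UBU†)`, extended linearly. -/
def twoCopy {q : ℕ} (U : Mat q) : BMat q →ₗ[ℂ] BMat q where
  toFun M := (U ⊗ₖ U) * M * (U ⊗ₖ U)ᴴ
  map_add' M N := by
    show (U ⊗ₖ U) * (M + N) * (U ⊗ₖ U)ᴴ = (U ⊗ₖ U) * M * (U ⊗ₖ U)ᴴ + (U ⊗ₖ U) * N * (U ⊗ₖ U)ᴴ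
    rw [Matrix.mul_add, Matrix.add_mul]
  map_smul' c M := by
    show (U ⊗ₖ U) * (c • M) * (U ⊗ₖ U)ᴴ = c • ((U ⊗ₖ U) * M * (U ⊗ₖ U)ᴴ)
    rw [Matrix.mul_smul, Matrix.smul_mul]

/-- The Hilbert–Schmidt inner product `⟨A, B⟩ = tr(A† B)`. -/
def hs {q : ℕ} (A B : BMat q) : ℂ := (Aᴴ * B).trace

/-- A subspace is invariant under the two-copy representation of `𝒩_q`. -/
def IsInvariant (q : ℕ) (W : Submodule ℂ (BMat q)) : Prop :=
  ∀ U ∈ Cliff q, ∀ v ∈ W, twoCopy U v ∈ W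

/-- A nonzero invariant subspace carries an irreducible subrepresentation. -/
def CarriesIrred (q : ℕ) (W : Submodule ℂ (BMat q)) : Prop :=
  W ≠ ⊥ ∧ IsInvariant q W ∧ ∀ W' ≤ W, IsInvariant q W' → W' = ⊥ ∨ W' = W

/-- Two invariant subspaces carry equivalent subrepresentations: there is a linear
isomorphism between them intertwining the two-copy representation. -/
def EquivRep (q : ℕ) (W W' : Submodule ℂ (BMat q)) : Prop :=
  ∃ T : BMat q →ₗ[ℂ] BMat q, Submodule.map T W = W' ∧
    (∀ x ∈ W, T x = 0 → x = 0) ∧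
    ∀ U ∈ Cliff q, ∀ x ∈ W, T (twoCopy U x) = twoCopy U (T x)

/-- `S_{σ,τ} = (σ⊗τ + τ⊗σ)/√2`. -/
def SVec {q : ℕ} (σ τ : Mat q) : BMat q :=
  ((Real.sqrt 2 : ℂ))⁻¹ • (σ ⊗ₖ τ + τ ⊗ₖ σ)

/-- `A_{σ,τ} = (σ⊗τ − τ⊗σ)/√2`. -/
def AVec {q : ℕ} (σ τ : Mat q) : BMat q :=
  ((Real.sqrt 2 : ℂ))⁻¹ • (σ ⊗ₖ τ - τ ⊗ₖ σ)

/-- The trivial sector `V_id`. -/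
def Vid (q : ℕ) : Submodule ℂ (BMat q) :=
  Submodule.span ℂ {sigma0 q ⊗ₖ sigma0 q}

/-- The right adjoint sector `V_r`. -/
def Vr (q : ℕ) : Submodule ℂ (BMat q) :=
  Submodule.span ℂ {M | ∃ τ ∈ sigmaSet q, M = sigma0 q ⊗ₖ τ}

/-- The left adjoint sector `V_l`. -/
def Vl (q : ℕ) : Submodule ℂ (BMat q) :=
  Submodule.span ℂ {M | ∃ τ ∈ sigmaSet q, M = τ ⊗ₖ sigma0 q}

/-- The diagonal sector `V_d`. -/
def Vdiag (q : ℕ) : Submodule ℂ (BMat q) :=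
  Submodule.span ℂ {M | ∃ τ ∈ sigmaSet q, M = τ ⊗ₖ τ}

/-- The symmetric commuting sector `V_[S]`. -/
def VScom (q : ℕ) : Submodule ℂ (BMat q) :=
  Submodule.span ℂ {M | ∃ τ ∈ sigmaSet q, ∃ σ ∈ CSet τ, M = SVec σ τ}

/-- The symmetric anti-commuting sector `V_{S}`. -/
def VSanti (q : ℕ) : Submodule ℂ (BMat q) :=
  Submodule.span ℂ {M | ∃ τ ∈ sigmaSet q, ∃ σ ∈ NSet τ, M = SVec σ τ}

/-- The antisymmetric commuting sector `V_[A]`. -/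
def VAcom (q : ℕ) : Submodule ℂ (BMat q) :=
  Submodule.span ℂ {M | ∃ τ ∈ sigmaSet q, ∃ σ ∈ CSet τ, M = AVec σ τ}

/-- The antisymmetric anti-commuting sector `V_{A}`. -/
def VAanti (q : ℕ) : Submodule ℂ (BMat q) :=
  Submodule.span ℂ {M | ∃ τ ∈ sigmaSet q, ∃ σ ∈ NSet τ, M = AVec σ τ}

/-- `V_[A]` presented with the spanning vectors `A_{σ,σ·τ}`, `σ ∈ C_τ`. -/
def VAcom' (q : ℕ) : Submodule ℂ (BMat q) :=
  Submodule.span ℂ {M | ∃ τ ∈ sigmaSet q, ∃ σ ∈ CSet τ, M = AVec σ (nprod σ τ)}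

/-- `V_0 = span{Σ_{σ∈σ_q} σ⊗σ}`. -/
def V0diag (q : ℕ) : Submodule ℂ (BMat q) :=
  Submodule.span ℂ {∑ᶠ σ ∈ sigmaSet q, σ ⊗ₖ σ}

/-- `V_1`, the "positive" part of the diagonal sector. -/
def V1diag (q : ℕ) : Submodule ℂ (BMat q) :=
  Submodule.span ℂ {v | ∃ lam : Mat q → ℂ,
    v = ∑ᶠ σ ∈ sigmaSet q, lam σ • (σ ⊗ₖ σ) ∧
    (∑ᶠ σ ∈ sigmaSet q, lam σ) = 0 ∧
    ∀ τ ∈ sigmaSet q, (∑ᶠ σ ∈ NSet τ, lam σ) = -((2 ^ q : ℂ) / 2) * lam τ}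

/-- `V_2`, the "negative" part of the diagonal sector. -/
def V2diag (q : ℕ) : Submodule ℂ (BMat q) :=
  Submodule.span ℂ {v | ∃ lam : Mat q → ℂ,
    v = ∑ᶠ σ ∈ sigmaSet q, lam σ • (σ ⊗ₖ σ) ∧
    (∑ᶠ σ ∈ sigmaSet q, lam σ) = 0 ∧
    ∀ τ ∈ sigmaSet q, (∑ᶠ σ ∈ NSet τ, lam σ) = ((2 ^ q : ℂ) / 2) * lam τ}

/-- `v^[adj]_τ = (2|C_τ|)^{-1/2} Σ_{σ∈C_τ} S_{σ,σ·τ}`. -/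
def vadjS {q : ℕ} (τ : Mat q) : BMat q :=
  ((Real.sqrt (2 * ((CSet τ).ncard : ℝ)) : ℂ))⁻¹ • ∑ᶠ σ ∈ CSet τ, SVec σ (nprod σ τ)

/-- `v^{adj}_τ = (2|N_τ|)^{-1/2} Σ_{σ∈N_τ} A_{σ,iσ·τ}`. -/
def vadjA {q : ℕ} (τ : Mat q) : BMat q :=
  ((Real.sqrt (2 * ((NSet τ).ncard : ℝ)) : ℂ))⁻¹ •
    ∑ᶠ σ ∈ NSet τ, AVec σ (Complex.I • nprod σ τ)

/-- The symmetric adjoint sector `V_[adj]`. -/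
def VadjS (q : ℕ) : Submodule ℂ (BMat q) :=
  Submodule.span ℂ {M | ∃ τ ∈ sigmaSet q, M = vadjS τ}

/-- The antisymmetric adjoint sector `V_{adj}`. -/
def VadjA (q : ℕ) : Submodule ℂ (BMat q) :=
  Submodule.span ℂ {M | ∃ τ ∈ sigmaSet q, M = vadjA τ}

/-- The orthogonal complement `V^⊥_{adj}` of `V_{adj}` inside `V_{A}`. -/
def VadjAperp (q : ℕ) : Submodule ℂ (BMat q) :=
  Submodule.span ℂ {v | v ∈ VAanti q ∧ ∀ w ∈ VadjA q, hs w v = 0}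

/-- `V_{1}^τ`. -/
def V1symτ (q : ℕ) (τ : Mat q) : Submodule ℂ (BMat q) :=
  Submodule.span ℂ {v | ∃ lam : Mat q → ℂ,
    v = ∑ᶠ σ ∈ NSet τ, lam σ • SVec σ (Complex.I • nprod σ τ) ∧
    ∀ ν ∈ NSet τ, (∑ᶠ σ ∈ NSet τ ∩ CSet ν, lam σ) - (∑ᶠ σ ∈ NSet τ ∩ NSet ν, lam σ)
      = ((2 ^ q : ℂ) / 2) * lam ν}

/-- `V_{2}^τ`. -/
def V2symτ (q : ℕ) (τ : Mat q) : Submodule ℂ (BMat q) :=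
  Submodule.span ℂ {v | ∃ lam : Mat q → ℂ,
    v = ∑ᶠ σ ∈ NSet τ, lam σ • SVec σ (Complex.I • nprod σ τ) ∧
    ∀ ν ∈ NSet τ, (∑ᶠ σ ∈ NSet τ ∩ CSet ν, lam σ) - (∑ᶠ σ ∈ NSet τ ∩ NSet ν, lam σ)
      = -((2 ^ q : ℂ) / 2) * lam ν}

/-- `V_{1} = ⊕_τ V_{1}^τ`. -/
def V1sym (q : ℕ) : Submodule ℂ (BMat q) := ⨆ τ ∈ sigmaSet q, V1symτ q τ

/-- `V_{2} = ⊕_τ V_{2}^τ`. -/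
def V2sym (q : ℕ) : Submodule ℂ (BMat q) := ⨆ τ ∈ sigmaSet q, V2symτ q τ

/-- The defining property of the map `Θ` on `V_[A]`. -/
def ThetaProp (q : ℕ) (Θ : BMat q →ₗ[ℂ] BMat q) : Prop :=
  ∀ τ ∈ sigmaSet q, ∀ σ ∈ CSet τ,
    Θ (AVec σ (nprod σ τ)) =
      (∑ᶠ σ' ∈ NSet τ ∩ CSet σ, AVec σ' (Complex.I • nprod σ' τ)) -
      ∑ᶠ σ' ∈ NSet τ ∩ NSet σ, AVec σ' (Complex.I • nprod σ' τ)

/-- `V` = span of off-diagonal products `σ⊗σ̂`, `σ ≠ σ̂`. -/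
def Voff (q : ℕ) : Submodule ℂ (BMat q) :=
  Submodule.span ℂ {M | ∃ σ ∈ sigmaSet q, ∃ σ' ∈ sigmaSet q, σ ≠ σ' ∧ M = σ ⊗ₖ σ'}

/-- `V^τ` = span of the `σ⊗σ̂` with `σ·σ̂ ∈ {τ, −τ, iτ, −iτ}`. -/
def Vtau (q : ℕ) (τ : Mat q) : Submodule ℂ (BMat q) :=
  Submodule.span ℂ {M | ∃ σ ∈ sigmaSet q, ∃ σ' ∈ sigmaSet q,
    (nprod σ σ' = τ ∨ nprod σ σ' = -τ ∨ nprod σ σ' = Complex.I • τ ∨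
      nprod σ σ' = -(Complex.I • τ)) ∧ M = σ ⊗ₖ σ'}


/-- The embedding `A ⊗ C` of a one-qubit and a `q'`-qubit matrix. -/
def embE {q' : ℕ} (e : (Fin (q' + 1) → Fin 2) ≃ Fin 2 × (Fin q' → Fin 2))
    (A : Matrix (Fin 2) (Fin 2) ℂ) (C : Mat q') : Mat (q' + 1) :=
  Matrix.reindex e.symm e.symm (A ⊗ₖ C)

section aux
variable {q' : ℕ} (e : (Fin (q' + 1) → Fin 2) ≃ Fin 2 × (Fin q' → Fin 2))

lemma embE_apply (A : Matrix (Fin 2) (Fin 2) ℂ) (C : Mat q') (x y : Idx (q' + 1)) :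
    embE e A C x y = A (e x).1 (e y).1 * C (e x).2 (e y).2 := by
  simp [embE, Matrix.kroneckerMap_apply]

lemma embE_mul (A B : Matrix (Fin 2) (Fin 2) ℂ) (C D : Mat q') :
    embE e A C * embE e B D = embE e (A * B) (C * D) := by
  simp only [embE, Matrix.reindex_apply, Matrix.submatrix_mul_equiv, Matrix.mul_kronecker_mul]

lemma embE_conj (A : Matrix (Fin 2) (Fin 2) ℂ) (C : Mat q') :
    (embE e A C)ᴴ = embE e Aᴴ Cᴴ := by
  ext x y
  simp [embE_apply, Matrix.conjTranspose_apply]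

lemma embE_smul_left (c : ℂ) (A : Matrix (Fin 2) (Fin 2) ℂ) (C : Mat q') :
    embE e (c • A) C = c • embE e A C := by
  ext x y
  simp [embE_apply, mul_assoc]

lemma embE_smul_right (c : ℂ) (A : Matrix (Fin 2) (Fin 2) ℂ) (C : Mat q') :
    embE e A (c • C) = c • embE e A C := by
  ext x y
  simp [embE_apply]; ring

lemma embE_one : embE e 1 1 = 1 := by
  simp [embE]

lemma embE_inj (A B : Matrix (Fin 2) (Fin 2) ℂ) (C D : Mat q')
    (h : embE e A C = embE e B D) (i j : Fin 2) : A i j • C = B i j • D := by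
  ext x y
  have := congrFun (congrFun h (e.symm (i, x))) (e.symm (j, y))
  simpa [embE_apply] using this

lemma twoCopy_SVec {q : ℕ} (U A B : Mat q) :
    twoCopy U (SVec A B) = SVec (U * A * Uᴴ) (U * B * Uᴴ) := by
  show (U ⊗ₖ U) * (SVec A B) * (U ⊗ₖ U)ᴴ = _
  simp only [SVec, Matrix.mul_smul, Matrix.smul_mul, Matrix.mul_add, Matrix.add_mul,
    Matrix.conjTranspose_kronecker, Matrix.mul_kronecker_mul]

lemma SVec_comm {q : ℕ} (A B : Mat q) : SVec A B = SVec B A := by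
  simp only [SVec, add_comm]

/-- The explicit model of the map `θ`. -/
def Theta0 : BMat q' →ₗ[ℂ] BMat (q' + 1) where
  toFun M := Matrix.of fun x y =>
    ((Real.sqrt 2 : ℂ)⁻¹ * (Real.sqrt 2 : ℂ)⁻¹ * (Real.sqrt 2 : ℂ)⁻¹ *
      ((1 : Matrix (Fin 2) (Fin 2) ℂ) (e x.1).1 (e y.1).1 *
        (!![1, 0; 0, -1] : Matrix (Fin 2) (Fin 2) ℂ) (e x.2).1 (e y.2).1 +
       (!![1, 0; 0, -1] : Matrix (Fin 2) (Fin 2) ℂ) (e x.1).1 (e y.1).1 *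
        (1 : Matrix (Fin 2) (Fin 2) ℂ) (e x.2).1 (e y.2).1)) *
      M ((e x.1).2, (e x.2).2) ((e y.1).2, (e y.2).2)
  map_add' M N := by
    ext x y
    simp [mul_add]
  map_smul' c M := by
    ext x y
    simp only [Matrix.of_apply, Matrix.smul_apply, smul_eq_mul, RingHom.id_apply]
    ring

lemma Theta0_kron (A : Mat q') :
    Theta0 e (A ⊗ₖ A) = SVec (embE e ((Real.sqrt 2 : ℂ)⁻¹ • 1) A)
      (embE e ((Real.sqrt 2 : ℂ)⁻¹ • !![1, 0; 0, -1]) A) := by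
  ext x y
  simp only [Theta0, SVec, LinearMap.coe_mk, AddHom.coe_mk, Matrix.of_apply, Matrix.smul_apply,
    Matrix.add_apply, Matrix.kroneckerMap_apply, embE_apply, smul_eq_mul]
  ring

lemma sqrt2_ne : (Real.sqrt 2 : ℂ) ≠ 0 := by
  simp

lemma sqrtd_ne (q : ℕ) : sqrtd q ≠ 0 := by
  unfold sqrtd
  have : (0 : ℝ) < Real.sqrt (2 ^ q) := by positivity
  exact_mod_cast this.ne'

lemma sqrtd_succ (q : ℕ) : sqrtd (q + 1) = (Real.sqrt 2 : ℂ) * sqrtd q := by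
  unfold sqrtd
  rw [pow_succ, mul_comm, Real.sqrt_mul (by norm_num)]
  push_cast; rfl

lemma Theta0_inj (M : BMat q') (h : Theta0 e M = 0) : M = 0 := by
  ext x y
  have := congrFun (congrFun h (e.symm (0, x.1), e.symm (0, x.2))) (e.symm (0, y.1), e.symm (0, y.2))
  simp only [Theta0, LinearMap.coe_mk, AddHom.coe_mk, Matrix.of_apply,
    Equiv.apply_symm_apply, Matrix.one_apply_eq, Matrix.zero_apply, Matrix.cons_val_zero] at this
  rcases mul_eq_zero.1 this with h1 | h1
  · exfalso
    have := sqrt2_ne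
    have h00 : ∀ i j : Fin 2, i = 0 → j = 0 → (1 : Matrix (Fin 2) (Fin 2) ℂ) i j = 1 := by
      rintro _ _ rfl rfl
      simp
    rw [h00 _ _ (by simp) (by simp), h00 _ _ (by simp) (by simp)] at h1
    norm_num at h1
  · exact h1

lemma PauliOp_cons (he : ∀ x, e x = (x 0, fun i => x i.succ)) (a : Fin (q' + 1) → Fin 4) :
    PauliOp a = embE e (pauli1 (a 0)) (PauliOp fun i => a i.succ) := by
  ext x y
  simp [PauliOp, embE_apply, he, Fin.prod_univ_succ]

lemma pauli_ne_zero {q : ℕ} (a : Fin q → Fin 4) : PauliOp a ≠ 0 := by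
  intro h
  have h1 := congrFun (congrFun h (fun _ => 0))
    (fun i => if a i = 1 ∨ a i = 2 then 1 else 0)
  simp only [PauliOp, Matrix.of_apply, Matrix.zero_apply, Finset.prod_eq_zero_iff] at h1
  obtain ⟨i, -, hi⟩ := h1
  generalize a i = k at hi
  fin_cases k <;> simp [pauli1] at hi

lemma pauli_ne_neg_one {q : ℕ} (a : Fin q → Fin 4) : PauliOp a ≠ -1 := by
  intro h
  have h1 := congrFun (congrFun h (fun _ => 0)) (fun _ => 0)
  have h2 : PauliOp a (fun _ => 0) (fun _ => 0) = 0 ∨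
      PauliOp a (fun _ => 0) (fun _ => 0) = 1 := by
    simp only [PauliOp, Matrix.of_apply]
    by_cases hz : ∃ i, pauli1 (a i) 0 0 = 0
    · left
      obtain ⟨i, hi⟩ := hz
      exact Finset.prod_eq_zero (Finset.mem_univ i) hi
    · right
      push Not at hz
      refine Finset.prod_eq_one fun i _ => ?_
      have := hz i
      generalize a i = k at this ⊢
      fin_cases k <;> simp [pauli1] at this ⊢
  rw [h1] at h2
  simp at h2
  norm_num at h2

lemma neg_sigma0_notMem (q : ℕ) : -sigma0 q ∉ sigmaHat q := by
  rintro ⟨a, ha⟩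
  apply pauli_ne_neg_one a
  rw [sigma0, ← smul_neg] at ha
  exact (smul_right_injective _ (inv_ne_zero (sqrtd_ne q)) ha).symm

/-- Conjugating by a Clifford sends `σ ⊗ σ` to some `ν ⊗ ν`. -/
lemma cliff_diag {q : ℕ} {C σ : Mat q} (hC : C ∈ Cliff q) (hσ : σ ∈ sigmaSet q) :
    (C * σ * Cᴴ) ⊗ₖ (C * σ * Cᴴ) ∈ Vdiag q := by
  obtain ⟨hU, hC⟩ := hC
  obtain ⟨ν, hν, h⟩ := hC σ hσ.1
  have hUU : Cᴴ * C = 1 := Matrix.mem_unitaryGroup_iff'.1 hU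
  have key : σ = Cᴴ * (C * σ * Cᴴ) * C := by
    rw [show Cᴴ * (C * σ * Cᴴ) * C = (Cᴴ * C) * σ * (Cᴴ * C) by simp only [Matrix.mul_assoc], hUU]
    simp
  have hs : Cᴴ * sigma0 q * C = sigma0 q := by
    simp [sigma0, hUU]
  apply Submodule.subset_span
  refine ⟨ν, ⟨hν, ?_⟩, ?_⟩
  · rintro rfl
    rcases h with h | h
    · rw [h, hs] at key
      exact hσ.2 key
    · rw [h, Matrix.mul_neg, Matrix.neg_mul, hs] at key
      exact neg_sigma0_notMem q (key ▸ hσ.1)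
  · rcases h with h | h
    · rw [h]
    · rw [h]
      ext x y
      simp [Matrix.kroneckerMap_apply]

lemma sqrt2_sq : (Real.sqrt 2 : ℂ) * (Real.sqrt 2 : ℂ) = 2 := by
  rw [← Complex.ofReal_mul, Real.mul_self_sqrt (by norm_num)]; norm_num

lemma ZZ : (!![1, 0; 0, -1] : Matrix (Fin 2) (Fin 2) ℂ) * !![1, 0; 0, -1] = 1 := by
  ext i j; fin_cases i <;> fin_cases j <;> simp

lemma nprod_emb (A : Matrix (Fin 2) (Fin 2) ℂ) (σ : Mat q') :
    nprod (embE e ((Real.sqrt 2 : ℂ)⁻¹ • A) σ) ((sqrtd (q' + 1))⁻¹ • embE e !![1, 0; 0, -1] 1)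
      = embE e ((Real.sqrt 2 : ℂ)⁻¹ • (A * !![1, 0; 0, -1])) σ := by
  rw [nprod, Matrix.mul_smul, smul_smul, mul_inv_cancel₀ (sqrtd_ne _), one_smul, embE_mul,
    Matrix.smul_mul, Matrix.mul_one]

lemma span_eq (he : ∀ x, e x = (x 0, fun i => x i.succ)) :
    {M | ∃ σ ∈ sigmaSet q', M = SVec (embE e ((Real.sqrt 2 : ℂ)⁻¹ • 1) σ)
      (embE e ((Real.sqrt 2 : ℂ)⁻¹ • !![1, 0; 0, -1]) σ)} =
    {M | ∃ σ' ∈ CSet ((sqrtd (q' + 1))⁻¹ • embE e !![1, 0; 0, -1] 1),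
      M = SVec σ' (nprod σ' ((sqrtd (q' + 1))⁻¹ • embE e !![1, 0; 0, -1] 1))} := by
  have norm : ∀ (A : Matrix (Fin 2) (Fin 2) ℂ) (P : Mat q'),
      embE e ((Real.sqrt 2 : ℂ)⁻¹ • A) ((sqrtd q')⁻¹ • P) = (sqrtd (q' + 1))⁻¹ • embE e A P := by
    intro A P
    rw [embE_smul_left, embE_smul_right, smul_smul, sqrtd_succ, mul_inv]
  have hinj := smul_right_injective (Mat (q' + 1)) (inv_ne_zero (sqrtd_ne (q' + 1)))
  ext M
  constructor
  · rintro ⟨σ, ⟨⟨a, rfl⟩, hne⟩, rfl⟩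
    have hne' : PauliOp a ≠ 1 := fun h => hne (by rw [h]; rfl)
    refine ⟨embE e ((Real.sqrt 2 : ℂ)⁻¹ • 1) ((sqrtd q')⁻¹ • PauliOp a), ⟨⟨?_, ?_⟩, ?_, ?_⟩, ?_⟩
    · refine ⟨Fin.cons 0 a, ?_⟩
      rw [norm, PauliOp_cons e he]
      simp [pauli1]
    · intro h
      rw [Set.mem_singleton_iff, norm, sigma0] at h
      have h := hinj h
      simp only [← embE_one e] at h
      exact hne' (by simpa using embE_inj e _ _ _ _ h 0 0)
    · intro h
      rw [norm] at h
      have h := hinj h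
      exact hne' (by simpa using embE_inj e _ _ _ _ h 0 0)
    · rw [norm]
      simp [embE_mul]
    · rw [nprod_emb, Matrix.one_mul]
  · rintro ⟨σ', ⟨⟨⟨a, rfl⟩, hne⟩, hnt, hc⟩, rfl⟩
    rw [PauliOp_cons e he] at hne hnt hc ⊢
    generalize (fun i => a (Fin.succ i)) = b at *
    generalize a 0 = k at *
    simp only [Matrix.smul_mul, Matrix.mul_smul, embE_mul, Matrix.mul_one, Matrix.one_mul] at hc
    have hc := embE_inj e _ _ _ _ (hinj (hinj hc)) 0 1
    have hb := pauli_ne_zero b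
    have hk : k = 0 ∨ k = 1 ∨ k = 2 ∨ k = 3 := by fin_cases k <;> simp
    rcases hk with rfl | rfl | rfl | rfl
    · refine ⟨(sqrtd q')⁻¹ • PauliOp b, ⟨⟨b, rfl⟩, ?_⟩, ?_⟩
      · intro h
        have h := smul_right_injective (Mat q') (inv_ne_zero (sqrtd_ne q')) h
        apply hne
        simp [show PauliOp b = 1 from h, pauli1, embE_one, sigma0]
      · rw [← norm, nprod_emb]
        simp [pauli1]
    · exfalso
      simp [pauli1] at hc
      exact hb (by simpa [neg_eq_iff_add_eq_zero, ← two_smul ℂ] using hc)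
    · exfalso
      simp [pauli1] at hc
      have h2 : (2 * Complex.I) • PauliOp b = 0 := by
        rw [two_mul, add_smul]
        nth_rewrite 1 [hc]
        simp
      exact hb ((smul_eq_zero.1 h2).resolve_left (by simp))
    · refine ⟨(sqrtd q')⁻¹ • PauliOp b, ⟨⟨b, rfl⟩, ?_⟩, ?_⟩
      · intro h
        have h := smul_right_injective (Mat q') (inv_ne_zero (sqrtd_ne q')) h
        apply hnt
        simp [show PauliOp b = 1 from h, pauli1]
      · rw [← norm, nprod_emb, SVec_comm]
        have : pauli1 3 = !![1, 0; 0, -1] := rfl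
        rw [this, ZZ]

lemma conj_emb (A : Matrix (Fin 2) (Fin 2) ℂ) (C σ : Mat q') :
    embE e 1 C * embE e A σ * (embE e 1 C)ᴴ = embE e A (C * σ * Cᴴ) := by
  simp [embE_conj, embE_mul]

end aux

/-- for `q = q′ + 1 ≥ 2` and `τ = (Z ⊗ 1)/√d`, the map
`θ : σ⊗σ ↦ S_{(1/√2)⊗σ, (Z/√2)⊗σ}` is a linear isomorphism of the diagonal sector
`V_d^{q−1}` onto `V_[S]^τ`, intertwining the `(q−1)`-qubit Clifford action with the
action of `1₂ ⊗ C`.  Here `e` is the canonical identification of the `q`-qubit index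
set with the product of the first-qubit and remaining-qubits index sets. -/
theorem statement14 (q' : ℕ) (hq' : 1 ≤ q')
    (e : (Fin (q' + 1) → Fin 2) ≃ Fin 2 × (Fin q' → Fin 2))
    (he : ∀ x, e x = (x 0, fun i => x i.succ)) :
    let emb : Matrix (Fin 2) (Fin 2) ℂ → Mat q' → Mat (q' + 1) :=
      fun M2 C => Matrix.reindex e.symm e.symm (M2 ⊗ₖ C)
    let τ : Mat (q' + 1) := (sqrtd (q' + 1))⁻¹ • emb !![1, 0; 0, -1] 1
    let VScomτ : Submodule ℂ (BMat (q' + 1)) :=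
      Submodule.span ℂ {M | ∃ σ' ∈ CSet τ, M = SVec σ' (nprod σ' τ)}
    (∃ θ : BMat q' →ₗ[ℂ] BMat (q' + 1), ∀ σ ∈ sigmaSet q',
      θ (σ ⊗ₖ σ) =
        SVec (emb ((Real.sqrt 2 : ℂ)⁻¹ • 1) σ)
             (emb ((Real.sqrt 2 : ℂ)⁻¹ • !![1, 0; 0, -1]) σ)) ∧
    ∀ θ : BMat q' →ₗ[ℂ] BMat (q' + 1),
      (∀ σ ∈ sigmaSet q',
        θ (σ ⊗ₖ σ) =
          SVec (emb ((Real.sqrt 2 : ℂ)⁻¹ • 1) σ)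
               (emb ((Real.sqrt 2 : ℂ)⁻¹ • !![1, 0; 0, -1]) σ)) →
      Submodule.map θ (Vdiag q') = VScomτ ∧
      (∀ x ∈ Vdiag q', θ x = 0 → x = 0) ∧
      ∀ C ∈ Cliff q', ∀ σ ∈ sigmaSet q',
        θ ((C * σ * Cᴴ) ⊗ₖ (C * σ * Cᴴ)) = twoCopy (emb 1 C) (θ (σ ⊗ₖ σ)) := by
  intro emb τ VS
  refine ⟨⟨Theta0 e, fun σ _ => Theta0_kron e σ⟩, ?_⟩
  intro θ hθ
  have hag : ∀ x ∈ Vdiag q', θ x = Theta0 e x := by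
    intro x hx
    refine LinearMap.eqOn_span (f := θ) (g := Theta0 e) ?_ hx
    rintro _ ⟨σ, hσ, rfl⟩
    rw [hθ σ hσ, Theta0_kron]
    rfl
  refine ⟨?_, ?_, ?_⟩
  · rw [Vdiag, Submodule.map_span]
    refine congrArg (Submodule.span ℂ) (Eq.trans ?_ (span_eq e he))
    ext M
    constructor
    · rintro ⟨_, ⟨σ, hσ, rfl⟩, rfl⟩
      exact ⟨σ, hσ, hθ σ hσ⟩
    · rintro ⟨σ, hσ, rfl⟩
      exact ⟨_, ⟨σ, hσ, rfl⟩, hθ σ hσ⟩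
  · intro x hx h0
    rw [hag x hx] at h0
    exact Theta0_inj e x h0
  · intro C hC σ hσ
    rw [hag _ (cliff_diag hC hσ), hθ σ hσ, Theta0_kron, twoCopy_SVec]
    exact congrArg₂ SVec (conj_emb e _ C σ).symm (conj_emb e _ C σ).symm

end CliffordPaper
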